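/- Let k₁/k be a separable algebraic field extension, V a finite-dimensional k-vector space, and H a group acting k-linearly on V. Then V is a semisimple k[H]-module if and only if V ⊗_k k₁ is a semisimple k₁[H]-module. -/

import Mathlib

open TensorProduct

/-- Extension of scalars of a representation: `H` acts on `k₁ ⊗[k] V` via
`h · (c ⊗ v) = c ⊗ (h · v)`. -/
noncomputable def Representation.extendScalars {k V H : Type*} (k₁ : Type*)
    [CommRing k] [CommRing k₁] [Algebra k k₁] [AddCommGroup V] [Module k V] [Monoid H]
    (ρ : Representation k H V) : Representation k₁ H (k₁ ⊗[k] V) where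
  toFun h := LinearMap.baseChange k₁ (ρ h)
  map_one' := by ext v; simp
  map_mul' g h := by ext v; simp

/-- Every invariant subspace admits an equivariant projection. -/
def Representation.HasProj {k V H : Type*} [Field k] [AddCommGroup V] [Module k V] [Monoid H]
    (ρ : Representation k H V) : Prop :=
  ∀ W : Submodule k V, (∀ h, ∀ w ∈ W, ρ h w ∈ W) →
    ∃ p : V →ₗ[k] V, (∀ h v, p (ρ h v) = ρ h (p v)) ∧ (∀ v, p v ∈ W) ∧ ∀ w ∈ W, p w = w

theorem Representation.hasProj_iff {k V H : Type*} [Field k] [AddCommGroup V] [Module k V]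
    [Monoid H] (ρ : Representation k H V) :
    IsSemisimpleModule (MonoidAlgebra k H) ρ.asModule ↔ ρ.HasProj := by
  rw [← isSemisimpleRepresentation_iff_isSemisimpleModule_asModule]
  constructor
  · intro hs W hW
    obtain ⟨⟨W', hW'⟩, hc⟩ := hs.exists_isCompl ⟨W, hW⟩
    have hc' : IsCompl W W' := by
      refine ⟨disjoint_iff.2 ?_, codisjoint_iff.2 ?_⟩
      · exact congrArg Subrepresentation.toSubmodule (disjoint_iff.1 hc.1)
      · exact congrArg Subrepresentation.toSubmodule (codisjoint_iff.1 hc.2)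
    refine ⟨W.subtype ∘ₗ Submodule.projectionOnto W W' hc', ?_, ?_, ?_⟩
    · intro h v
      obtain ⟨a, ha, b, hb, rfl⟩ := Submodule.mem_sup.1
        (show v ∈ W ⊔ W' by rw [hc'.sup_eq_top]; trivial)
      have e1 : ∀ x (hx : x ∈ W), (Submodule.projectionOnto W W' hc' x : V) = x :=
        fun x hx => congrArg Subtype.val (Submodule.projectionOnto_apply_left hc' ⟨x, hx⟩)
      have e2 : ∀ x (hx : x ∈ W'), Submodule.projectionOnto W W' hc' x = 0 :=
        fun x hx => Submodule.projectionOnto_apply_right hc' ⟨x, hx⟩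
      simp [e1 a ha, e1 _ (hW h a ha), e2 b hb, e2 _ (hW' h hb)]
    · intro v
      exact Subtype.property _
    · intro w hw
      exact congrArg Subtype.val (Submodule.projectionOnto_apply_left hc' ⟨w, hw⟩)
  · intro hp
    refine ⟨fun W => ?_⟩
    obtain ⟨p, h1, h2, h3⟩ := hp W.toSubmodule (fun h w hw => W.apply_mem_toSubmodule h hw)
    refine ⟨⟨LinearMap.ker p, fun h v hv => ?_⟩, ?_, ?_⟩
    · rw [LinearMap.mem_ker] at hv ⊢
      rw [h1, hv, map_zero]
    · rw [disjoint_iff]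
      apply Subrepresentation.toSubmodule_injective
      change W.toSubmodule ⊓ LinearMap.ker p = ⊥
      rw [Submodule.eq_bot_iff]
      rintro x ⟨hx, hx'⟩
      rw [← h3 x hx]; exact hx'
    · rw [codisjoint_iff]
      apply Subrepresentation.toSubmodule_injective
      change W.toSubmodule ⊔ LinearMap.ker p = ⊤
      rw [Submodule.eq_top_iff']
      intro x
      refine Submodule.mem_sup.2 ⟨p x, h2 x, x - p x, ?_, by abel⟩
      rw [LinearMap.mem_ker, map_sub, h3 _ (h2 x), sub_self]

/-- The `k`-linear representation on `k₁ ⊗ V`. -/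
noncomputable def Representation.restrExt {k V H : Type*} (k₁ : Type*)
    [Field k] [Field k₁] [Algebra k k₁] [AddCommGroup V] [Module k V] [Monoid H]
    (ρ : Representation k H V) : Representation k H (k₁ ⊗[k] V) where
  toFun h := LinearMap.lTensor k₁ (ρ h)
  map_one' := by ext v; simp
  map_mul' g h := by ext v; simp

theorem Representation.isSemisimple_of_family {k V X ι H : Type*}
    [Field k] [AddCommGroup V] [Module k V] [AddCommGroup X] [Module k X] [Monoid H]
    (ρ : Representation k H V) (σ : Representation k H X)
    (hs : IsSemisimpleModule (MonoidAlgebra k H) ρ.asModule)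
    (f : ι → V →ₗ[k] X) (hf : ∀ i h v, f i (ρ h v) = σ h (f i v))
    (htop : ∀ N : AddSubmonoid X, (∀ i v, f i v ∈ N) → ∀ x, x ∈ N) :
    IsSemisimpleModule (MonoidAlgebra k H) σ.asModule := by
  let f' (c : ι) : IntertwiningMap ρ σ :=
    { toLinearMap := f c
      isIntertwining' := fun g => by ext v; simp [hf] }
  let F (c : ι) : ρ.asModule →ₗ[MonoidAlgebra k H] σ.asModule :=
    IntertwiningMap.equivLinearMapAsModule ρ σ (f' c)
  have hF : ∀ c (v : V), F c v = f c v := fun c v => rfl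
  refine isSemisimpleModule_of_isSemisimpleModule_submodule' (p := fun c => LinearMap.range (F c))
    (fun i => .range _) ?_
  rw [Submodule.eq_top_iff']
  intro x
  exact htop (⨆ i, LinearMap.range (F i)).toAddSubmonoid
    (fun i v => Submodule.mem_iSup_of_mem (p := fun c => LinearMap.range (F c)) i ⟨v, hF i v⟩) x

theorem Representation.restrExt_hasProj {k k₁ V H : Type*}
    [Field k] [Field k₁] [Algebra k k₁] [AddCommGroup V] [Module k V] [Monoid H]
    (ρ : Representation k H V) (hs : IsSemisimpleModule (MonoidAlgebra k H) ρ.asModule) :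
    (ρ.restrExt k₁).HasProj := by
  rw [← Representation.hasProj_iff]
  refine ρ.isSemisimple_of_family (ρ.restrExt k₁) hs (fun c => TensorProduct.mk k k₁ V c)
    (fun c h v => rfl) ?_
  intro N hN x
  induction x using TensorProduct.induction_on with
  | zero => exact N.zero_mem
  | tmul c v => exact hN c v
  | add x y hx hy => exact N.add_mem hx hy

theorem extendScalars_hasProj {k k₁ V H : Type*} [Field k] [Field k₁] [Algebra k k₁]
    [Algebra.IsSeparable k k₁]
    [AddCommGroup V] [Module k V] [FiniteDimensional k V] [Group H]
    (ρ : Representation k H V) (hs : (ρ.restrExt k₁).HasProj) :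
    (ρ.extendScalars k₁).HasProj := by
  intro U hU
  obtain ⟨p, hp1, hp2, hp3⟩ := hs (U.restrictScalars k) (fun h w hw => hU h w hw)
  obtain ⟨S, hS⟩ : U.FG := IsNoetherian.noetherian U
  obtain ⟨M, hM, hSM⟩ :=
    TensorProduct.exists_finite_submodule_left_of_setFinite (S : Set (k₁ ⊗[k] V)) S.finite_toSet
  obtain ⟨T, hT⟩ : M.FG := Module.Finite.iff_fg.1 hM
  let L : IntermediateField k k₁ := IntermediateField.adjoin k (T : Set k₁)
  have hML : ∀ m ∈ M, m ∈ L := by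
    have : M ≤ Subalgebra.toSubmodule L.toSubalgebra := by
      rw [← hT, Submodule.span_le]
      exact IntermediateField.subset_adjoin k (T : Set k₁)
    exact fun m hm => this hm
  have : FiniteDimensional k L :=
    IntermediateField.finiteDimensional_adjoin (fun x _ => Algebra.IsSeparable.isIntegral k x)
  have : Algebra.FormallyUnramified k L := Algebra.FormallyUnramified.of_isSeparable k L
  let B (v : V) : L ⊗[k] L →ₗ[k] k₁ ⊗[k] V := TensorProduct.lift
    (LinearMap.mk₂ k (fun a b : L => (a : k₁) • p ((b : k₁) ⊗ₜ[k] v))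
      (by intros; simp [add_smul]) (by intros; simp [Algebra.smul_def, mul_smul])
      (by intros; simp [TensorProduct.add_tmul])
      (by
        intro c m n
        have : ((c • n : L) : k₁) ⊗ₜ[k] v = c • ((n : k₁) ⊗ₜ[k] v) := by
          rw [TensorProduct.smul_tmul']; rfl
        rw [this, map_smul, smul_comm]))
  have hB : ∀ v a b, B v (a ⊗ₜ b) = (a : k₁) • p ((b : k₁) ⊗ₜ[k] v) := fun v a b => rfl
  let E : L ⊗[k] L := Algebra.FormallyUnramified.elem k L
  have key : ∀ v (l : L) (Z : L ⊗[k] L), B v ((l ⊗ₜ 1) * Z) = (l : k₁) • B v Z := by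
    intro v l Z
    induction Z using TensorProduct.induction_on with
    | zero => simp
    | tmul a b => simp [hB, mul_smul]
    | add x y hx hy => rw [mul_add, map_add, map_add, hx, hy, smul_add]
  let q0 : V →ₗ[k] k₁ ⊗[k] V :=
    { toFun := fun v => B v E
      map_add' := fun x y => by
        induction E using TensorProduct.induction_on with
        | zero => simp
        | tmul a b => simp [hB, TensorProduct.tmul_add]
        | add s t hs ht => simp only [map_add, hs, ht]; abel
      map_smul' := fun c x => by
        induction E using TensorProduct.induction_on with
        | zero => simp
        | tmul a b => simp only [hB, TensorProduct.tmul_smul, map_smul, RingHom.id_apply]; rw [smul_comm]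
        | add s t hs ht => simp only [map_add, hs, ht, smul_add] }
  have hq0 : ∀ v, q0 v = B v E := fun v => rfl
  let q : k₁ ⊗[k] V →ₗ[k₁] k₁ ⊗[k] V := TensorProduct.AlgebraTensorModule.lift
    ((LinearMap.toSpanSingleton k₁ (V →ₗ[k] k₁ ⊗[k] V) q0))
  have hq : ∀ c v, q (c ⊗ₜ v) = c • B v E := fun c v => rfl
  -- generalised averaging on `L ⊗ V`
  let A (x : k₁ ⊗[k] V) : L ⊗[k] L →ₗ[k] k₁ ⊗[k] V := TensorProduct.lift
    (LinearMap.mk₂ k (fun a b : L => (a : k₁) • p ((b : k₁) • x))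
      (by intros; simp [add_smul]) (by intros; simp [Algebra.smul_def, mul_smul])
      (by intros; simp [add_smul])
      (by
        intro c m n
        have : ((c • n : L) : k₁) • x = c • ((n : k₁) • x) := by
          rw [← smul_assoc]; rfl
        rw [this, map_smul, smul_comm]))
  have hA : ∀ x a b, A x (a ⊗ₜ b) = (a : k₁) • p ((b : k₁) • x) := fun v a b => rfl
  have hAadd : ∀ x y Z, A (x + y) Z = A x Z + A y Z := by
    intro x y Z
    induction Z using TensorProduct.induction_on with
    | zero => simp
    | tmul a b => simp [hA]
    | add s t hs ht => simp only [map_add, hs, ht]; abel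
  have hAB : ∀ (l : L) v Z, A ((l : k₁) ⊗ₜ v) Z = B v ((1 ⊗ₜ l) * Z) := by
    intro l v Z
    induction Z using TensorProduct.induction_on with
    | zero => simp
    | tmul a b => simp [hA, hB, TensorProduct.smul_tmul', mul_comm]
    | add s t hs ht => simp only [map_add, hs, ht, mul_add]
  have hAU : ∀ u ∈ U, ∀ Z, A u Z = ((Algebra.TensorProduct.lmul' k Z : L) : k₁) • u := by
    intro u hu Z
    induction Z using TensorProduct.induction_on with
    | zero => simp
    | tmul a b =>
      rw [hA, hp3 _ (U.smul_mem _ hu)]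
      simp [mul_smul]
    | add s t hs ht => simp only [map_add, hs, ht]; simp [add_smul]
  have hqA : ∀ y : M ⊗[k] V, q (M.subtype.rTensor V y) = A (M.subtype.rTensor V y) E := by
    intro y
    induction y using TensorProduct.induction_on with
    | zero =>
      have : A 0 E = 0 := by simpa using hAadd 0 0 E
      simp [this]
    | tmul m v =>
      have h1 := hAB ⟨m, hML m m.2⟩ v E
      have h2 := Algebra.FormallyUnramified.one_tmul_mul_elem (R := k) (S := L) ⟨m, hML m m.2⟩
      rw [h2, key] at h1
      exact h1.symm
    | add s t hs ht => simp only [map_add, hs, ht, hAadd]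
  have hBU : ∀ v Z, B v Z ∈ U := by
    intro v Z
    induction Z using TensorProduct.induction_on with
    | zero => simp
    | tmul a b => exact U.smul_mem _ (hp2 _)
    | add s t hs ht => rw [map_add]; exact U.add_mem hs ht
  have hBρ : ∀ h v Z, B (ρ h v) Z = ρ.extendScalars k₁ h (B v Z) := by
    intro h v Z
    induction Z using TensorProduct.induction_on with
    | zero => simp
    | tmul a b =>
      rw [hB, hB, map_smul]
      exact congrArg _ (hp1 h ((b : k₁) ⊗ₜ v))
    | add s t hs ht => simp only [map_add, hs, ht]
  refine ⟨q, ?_, ?_, ?_⟩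
  · intro h x
    induction x using TensorProduct.induction_on with
    | zero => simp
    | tmul c v =>
      have : ρ.extendScalars k₁ h (c ⊗ₜ v) = c ⊗ₜ ρ h v := rfl
      rw [this, hq, hq, hBρ, map_smul]
    | add s t hs ht => simp only [map_add, hs, ht]
  · intro x
    induction x using TensorProduct.induction_on with
    | zero => simp
    | tmul c v => rw [hq]; exact U.smul_mem _ (hBU _ _)
    | add s t hs ht => rw [map_add]; exact U.add_mem hs ht
  · have : U ≤ LinearMap.eqLocus q LinearMap.id := by
      conv_lhs => rw [← hS]
      rw [Submodule.span_le]
      intro u hu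
      have huU : u ∈ U := by rw [← hS]; exact Submodule.subset_span hu
      obtain ⟨y, rfl⟩ := hSM hu
      change q _ = _
      rw [hqA, hAU _ huU]
      simp only [E]
      rw [Algebra.FormallyUnramified.lmul_elem]
      simp
    exact fun w hw => this hw

theorem hasProj_of_extendScalars {k k₁ V H : Type*} [Field k] [Field k₁] [Algebra k k₁]
    [AddCommGroup V] [Module k V] [Group H]
    (ρ : Representation k H V) (hs : (ρ.extendScalars k₁).HasProj) : ρ.HasProj := by
  intro W hW
  obtain ⟨l, hl⟩ : ∃ l : k₁ →ₗ[k] k, l 1 = 1 := by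
    obtain ⟨l, hl⟩ := LinearMap.exists_leftInverse_of_injective (Algebra.linearMap k k₁)
      (LinearMap.ker_eq_bot.2 (algebraMap k k₁).injective)
    exact ⟨l, by simpa using LinearMap.congr_fun hl 1⟩
  obtain ⟨p, h1, h2, h3⟩ := hs (W.baseChange k₁) (by
    intro h w hw
    have : W.baseChange k₁ ≤ (W.baseChange k₁).comap (ρ.extendScalars k₁ h) := by
      conv_lhs => rw [Submodule.baseChange_eq_span]
      rw [Submodule.span_le]
      rintro _ ⟨w, hw, rfl⟩
      exact Submodule.tmul_mem_baseChange_of_mem 1 (hW h w hw)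
    exact this hw)
  let r : k₁ ⊗[k] V →ₗ[k] V := TensorProduct.lid k V ∘ₗ l.rTensor V
  have hr : ∀ c v, r (c ⊗ₜ v) = l c • v := fun c v => by simp [r]
  have hrρ : ∀ h x, r (ρ.extendScalars k₁ h x) = ρ h (r x) := by
    intro h x
    induction x using TensorProduct.induction_on with
    | zero => simp
    | tmul c v =>
      have : ρ.extendScalars k₁ h (c ⊗ₜ v) = c ⊗ₜ ρ h v := rfl
      rw [this, hr, hr, map_smul]
    | add s t hs ht => simp only [map_add, hs, ht]
  have hrW : ∀ x ∈ W.baseChange k₁, r x ∈ W := by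
    intro x hx
    obtain ⟨y, rfl⟩ : x ∈ LinearMap.range (W.subtype.baseChange k₁) := by
      exact hx
    induction y using TensorProduct.induction_on with
    | zero => simp
    | tmul c v =>
      have : W.subtype.baseChange k₁ (c ⊗ₜ v) = c ⊗ₜ (v : V) := rfl
      rw [this, hr]
      exact W.smul_mem _ v.2
    | add s t hs ht =>
      simp only [map_add]
      exact W.add_mem (hs ⟨_, rfl⟩)
        (ht ⟨_, rfl⟩)
  refine ⟨r ∘ₗ p.restrictScalars k ∘ₗ TensorProduct.mk k k₁ V 1, ?_, ?_, ?_⟩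
  · intro h v
    have : (1 : k₁) ⊗ₜ[k] ρ h v = ρ.extendScalars k₁ h (1 ⊗ₜ v) := rfl
    simp [this, h1, hrρ]
  · intro v
    exact hrW _ (h2 _)
  · intro w hw
    have := h3 (1 ⊗ₜ w) (Submodule.tmul_mem_baseChange_of_mem 1 hw)
    simp [this, hr, hl]


/-- **Serre's question for `GL(V)`.** If `k₁/k` is a separable algebraic field
extension, `V` a finite-dimensional `k`-vector space and `H` a group acting
`k`-linearly on `V`, then `V` is a semisimple `k[H]`-module if and only if
`V ⊗[k] k₁` is a semisimple `k₁[H]`-module. -/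
theorem semisimple_iff_semisimple_extendScalars_of_separable
    {k k₁ V H : Type*} [Field k] [Field k₁] [Algebra k k₁] [Algebra.IsAlgebraic k k₁]
    [Algebra.IsSeparable k k₁]
    [AddCommGroup V] [Module k V] [FiniteDimensional k V] [Group H]
    (ρ : Representation k H V) :
    IsSemisimpleModule (MonoidAlgebra k H) ρ.asModule ↔
      IsSemisimpleModule (MonoidAlgebra k₁ H) (ρ.extendScalars k₁).asModule := by
  constructor
  · intro hs
    exact (Representation.hasProj_iff _).2 (extendScalars_hasProj ρ (ρ.restrExt_hasProj hs))
  · intro hs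
    exact (Representation.hasProj_iff _).2
      (hasProj_of_extendScalars ρ ((Representation.hasProj_iff _).1 hs))
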